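/- Let q ≥ 2, let K_{3q−2} be the complete simple graph on 3q−2 vertices, let v be a vertex of K_{3q−2}, and let N be a set of q−1 edges of K_{3q−2} all incident to v (joining v to q−1 distinct other vertices). Then the graph obtained from K_{3q−2} by deleting the edges of N is not q-winding. -/

import Mathlib

noncomputable section

/-- The Euclidean plane `ℝ²`. -/
abbrev E2 : Type := EuclideanSpace ℝ (Fin 2)

/-- A plane drawing of a simple graph `G`: an assignment of points of `ℝ²` to the
vertices and of continuous paths to the edges (one path per edge, the path for the
edge traversed in the opposite direction being the reverse). -/
structure Drawing {V : Type*} (G : SimpleGraph V) where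
  vert : V → E2
  edgePath : ∀ {a b : V}, G.Adj a b → Path (vert a) (vert b)
  edgePath_symm : ∀ {a b : V} (h : G.Adj a b), edgePath h.symm = (edgePath h).symm

/-- The image of a walk under a drawing: the union of the images of the paths of
its edges (for the trivial walk, the image of its single vertex). -/
def walkImage {V : Type*} {G : SimpleGraph V} (D : Drawing G) :
    ∀ {a b : V}, G.Walk a b → Set E2
  | a, _, SimpleGraph.Walk.nil => {D.vert a}
  | _, _, SimpleGraph.Walk.cons h w => Set.range ⇑(D.edgePath h) ∪ walkImage D w

/-- The continuous path in `ℝ²` obtained by concatenating the paths of the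
consecutive edges of a walk. -/
def walkPath {V : Type*} {G : SimpleGraph V} (D : Drawing G) :
    ∀ {a b : V}, G.Walk a b → Path (D.vert a) (D.vert b)
  | _, _, SimpleGraph.Walk.nil => Path.refl _
  | _, _, SimpleGraph.Walk.cons h w => (D.edgePath h).trans (walkPath D w)

/-- A graph `G` is `q`-winding if for every plane drawing of `G` there are `q`
pairwise vertex-disjoint walks, each a path or a cycle, and a point `x ∈ ℝ²`, such
that each path passes through `x`, and each cycle passes through `x` or its
associated loop is not nullhomotopic in `ℝ² \ {x}` (i.e. not path-homotopic to a
constant loop). -/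
def IsQWinding {V : Type*} [DecidableEq V] (G : SimpleGraph V) (q : ℕ) : Prop :=
  ∀ D : Drawing G,
    ∃ (a b : Fin q → V) (w : ∀ i, G.Walk (a i) (b i)) (x : E2),
      (∀ i j, i ≠ j → Disjoint (w i).support.toFinset (w j).support.toFinset) ∧
      ∀ i,
        ((w i).IsPath ∧ x ∈ walkImage D (w i)) ∨
        (∃ h : b i = a i, ((w i).copy rfl h).IsCycle ∧
          (x ∈ walkImage D (w i) ∨
            ∀ (p : ↥({x}ᶜ : Set E2)) (γ : Path p p),
              (∀ t, (γ t : E2) = (walkPath D ((w i).copy rfl h)) t) →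
              ¬ γ.Homotopic (Path.refl p)))

namespace Drawing

variable {V : Type*} {G : SimpleGraph V}

/-- The drawing with prescribed vertex positions whose edges are straight segments. -/
def straight (G : SimpleGraph V) (f : V → E2) : Drawing G where
  vert := f
  edgePath := fun {a b} _ => Path.segment (f a) (f b)
  edgePath_symm := fun _ => (Path.segment_symm _ _).symm

/-- In a straight-line drawing, the image of a walk lies in the convex hull of its vertices. -/
theorem walkImage_straight_subset (f : V → E2) {a b : V} (w : G.Walk a b) :
    walkImage (straight G f) w ⊆ convexHull ℝ (f '' {u | u ∈ w.support}) := by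
  induction w with
  | nil => simp [walkImage, straight]
  | @cons a b c h w ih =>
    have hsub : f '' {u | u ∈ w.support} ⊆ f '' {u | u ∈ (SimpleGraph.Walk.cons h w).support} :=
      Set.image_mono fun u (hu : u ∈ w.support) => List.mem_cons_of_mem _ hu
    refine Set.union_subset ?_ (ih.trans (convexHull_mono hsub))
    change Set.range (Path.segment (f a) (f b)) ⊆ _
    rw [Path.range_segment]
    refine (convex_convexHull ℝ _).segment_subset (subset_convexHull ℝ _ ?_)
      (subset_convexHull ℝ _ (hsub ?_))
    · exact ⟨a, SimpleGraph.Walk.start_mem_support _, rfl⟩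
    · exact ⟨b, SimpleGraph.Walk.start_mem_support _, rfl⟩

theorem range_walkPath_subset (D : Drawing G) {a b : V} (w : G.Walk a b) :
    Set.range (walkPath D w) ⊆ walkImage D w := by
  induction w with
  | nil => simp [walkPath, walkImage]
  | cons h w ih =>
    rw [walkPath, Path.trans_range, walkImage]
    exact Set.union_subset_union_right _ ih

end Drawing

/-- A loop contained in a convex set missing `x` is nullhomotopic in the complement of `x`. -/
theorem Convex.exists_homotopic_refl_of_notMem {K : Set E2} (hK : Convex ℝ K) {x y : E2}
    (hx : x ∉ K) (ω : Path y y) (hω : ∀ t, ω t ∈ K) :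
    ∃ (p : ↥({x}ᶜ : Set E2)) (γ : Path p p),
      (∀ t, (γ t : E2) = ω t) ∧ γ.Homotopic (Path.refl p) := by
  have hy : y ∈ K := by simpa using hω 0
  have := hK.contractibleSpace ⟨y, hy⟩
  have hKx : ∀ z : K, (z : E2) ∈ ({x}ᶜ : Set E2) := fun z hz => hx (hz ▸ z.2)
  let ι : C(K, ↥({x}ᶜ : Set E2)) := ⟨fun z => ⟨z, hKx z⟩, by fun_prop⟩
  let ω' : Path (⟨y, hy⟩ : K) ⟨y, hy⟩ :=
    { toFun := fun t => ⟨ω t, hω t⟩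
      continuous_toFun := by fun_prop
      source' := by simp
      target' := by simp }
  exact ⟨ι ⟨y, hy⟩, ω'.map ι.continuous, fun _ => rfl,
    (SimplyConnectedSpace.paths_homotopic ω' (Path.refl _)).map ι⟩

/-- A weak homogeneous linear inequality passes to the convex hull. -/
theorem nonneg_of_mem_convexHull {s : Set E2} {x : E2} (hx : x ∈ convexHull ℝ s) (c d : ℝ)
    (h : ∀ p ∈ s, 0 ≤ c * p 0 + d * p 1) : 0 ≤ c * x 0 + d * x 1 := by
  have hlin : IsLinearMap ℝ fun p : E2 => c * p 0 + d * p 1 :=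
    ⟨fun p r => by simp; ring, fun r p => by simp; ring⟩
  exact convexHull_min h (convex_halfSpace_ge hlin 0) hx

/-- A strict homogeneous linear inequality passes to the convex hull. -/
theorem pos_of_mem_convexHull {s : Set E2} {x : E2} (hx : x ∈ convexHull ℝ s) (c d : ℝ)
    (h : ∀ p ∈ s, 0 < c * p 0 + d * p 1) : 0 < c * x 0 + d * x 1 := by
  have hlin : IsLinearMap ℝ fun p : E2 => c * p 0 + d * p 1 :=
    ⟨fun p r => by simp; ring, fun r p => by simp; ring⟩
  exact convexHull_min h (convex_halfSpace_gt hlin 0) hx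

/-- A vertex of a walk is adjacent to another vertex of the walk, unless it is the only one. -/
theorem SimpleGraph.Walk.exists_adj_of_mem_support {V : Type*} {G : SimpleGraph V} {a b : V}
    (w : G.Walk a b) {v u : V} (hv : v ∈ w.support) (hu : u ∈ w.support) (huv : u ≠ v) :
    ∃ z ∈ w.support, G.Adj v z := by
  induction w generalizing u with
  | nil => simp_all
  | @cons a b c h w ih =>
    have hb : b ∈ (cons h w).support := List.mem_cons_of_mem _ w.start_mem_support
    rcases List.mem_cons.1 hv with rfl | hv
    · exact ⟨b, hb, h⟩
    · by_cases hbv : b = v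
      · exact ⟨a, start_mem_support _, hbv ▸ h.symm⟩
      · obtain ⟨z, hz, hvz⟩ := ih hv w.start_mem_support hbv
        exact ⟨z, List.mem_cons_of_mem _ hz, hvz⟩

/-- Among `q` pairwise disjoint finite sets, one misses any given set of fewer than `q` points. -/
theorem exists_forall_notMem_of_card_lt {V : Type*} [DecidableEq V] {q : ℕ} {T : Fin q → Finset V}
    (hT : ∀ i j, i ≠ j → Disjoint (T i) (T j)) {S : Finset V} (hS : S.card < q) :
    ∃ i, ∀ u ∈ T i, u ∉ S := by
  by_contra! h
  choose g hgT hgS using h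
  have hg : Function.Injective g := fun i j hij => by
    by_contra hne
    exact Finset.disjoint_left.1 (hT i j hne) (hgT i) (hij ▸ hgT j)
  have := Finset.card_le_card_of_injOn g (s := Finset.univ) (t := S) (fun i _ => hgS i) hg.injOn
  simp at this
  omega

/-- For every placement of the vertices of a `q`-winding graph there are `q` pairwise disjoint walks
such that the convex hulls of their vertices have a common point. -/
theorem IsQWinding.exists_mem_convexHull {V : Type*} [DecidableEq V] {G : SimpleGraph V} {q : ℕ}
    (hG : IsQWinding G q) (f : V → E2) :
    ∃ (a b : Fin q → V) (w : ∀ i, G.Walk (a i) (b i)) (x : E2),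
      (∀ i j, i ≠ j → Disjoint (w i).support.toFinset (w j).support.toFinset) ∧
      ∀ i, x ∈ convexHull ℝ (f '' {u | u ∈ (w i).support}) := by
  obtain ⟨a, b, w, x, hdisj, hw⟩ := hG (Drawing.straight G f)
  refine ⟨a, b, w, x, hdisj, fun i => ?_⟩
  rcases hw i with ⟨-, hx⟩ | ⟨h, -, hx | hx⟩
  · exact Drawing.walkImage_straight_subset f _ hx
  · exact Drawing.walkImage_straight_subset f _ hx
  · by_contra hxK
    obtain ⟨p, γ, hγ, hnull⟩ := (convex_convexHull ℝ _).exists_homotopic_refl_of_notMem hxK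
      (walkPath (Drawing.straight G f) ((w i).copy rfl h)) fun t => by
        have := Drawing.walkImage_straight_subset f _
          (Drawing.range_walkPath_subset _ ((w i).copy rfl h) ⟨t, rfl⟩)
        simpa using this
    exact hx p γ hγ hnull

/-- The complement of `v` in `3q - 2` vertices splits into the `q - 1` vertices joined to `v` by
edges of `N` and two further sets of size `q - 1`. -/
theorem exists_vertex_partition {q : ℕ} (hq : 2 ≤ q) (v : Fin (3*q-2))
    (N : Finset (Sym2 (Fin (3*q-2)))) (hN : ∀ e ∈ N, v ∈ e ∧ ¬ e.IsDiag)
    (hNcard : N.card = q - 1) :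
    ∃ A B C : Finset (Fin (3*q-2)), A.card < q ∧ B.card < q ∧ C.card < q ∧
      (∀ u ∈ A, s(v, u) ∈ N) ∧
      ∀ u, u ≠ v → u ∉ A → u ∉ B → u ∈ C := by
  let A := Finset.univ.filter fun u => s(v, u) ∈ N
  have hinj : Function.Injective fun u => s(v, u) := fun _ _ h => Sym2.congr_right.1 h
  have hAN : A.image (fun u => s(v, u)) = N := by
    ext e
    simp only [Finset.mem_image, Finset.mem_filter, Finset.mem_univ, true_and, A]
    constructor
    · rintro ⟨u, hu, rfl⟩
      exact hu
    · intro he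
      obtain ⟨u, rfl⟩ := (hN e he).1
      exact ⟨u, he, rfl⟩
  have hA : A.card = q - 1 := by rw [← hNcard, ← hAN, Finset.card_image_of_injective _ hinj]
  have hvA : v ∉ A := fun h => (hN _ (Finset.mem_filter.1 h).2).2 (by simp)
  have hR : (insert v A)ᶜ.card = 2 * (q - 1) := by
    rw [Finset.card_compl, Finset.card_insert_of_notMem hvA, hA, Fintype.card_fin]
    omega
  obtain ⟨B, hBR, hB⟩ := Finset.exists_subset_card_eq (s := (insert v A)ᶜ) (n := q - 1) (by omega)
  refine ⟨A, B, (insert v A)ᶜ \ B, by omega, by omega, ?_, fun u hu => (Finset.mem_filter.1 hu).2,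
    fun u huv huA huB => ?_⟩
  · rw [Finset.card_sdiff_of_subset hBR]
    omega
  · simp [huv, huA, huB]

/-- Deleting `q - 1` edges meeting in one vertex from `K_{3q-2}` yields a graph
that is not `q`-winding. -/
theorem complete_minus_star_not_winding (q : ℕ) (hq : 2 ≤ q)
    (v : Fin (3*q-2)) (N : Finset (Sym2 (Fin (3*q-2))))
    (hN : ∀ e ∈ N, v ∈ e ∧ ¬ e.IsDiag)
    (hNcard : N.card = q - 1) :
    ¬ IsQWinding ((⊤ : SimpleGraph (Fin (3*q-2))).deleteEdges ↑N) q := by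
  intro hG
  obtain ⟨A, B, C, hA, hB, hC, hAN, hABC⟩ := exists_vertex_partition hq v N hN hNcard
  obtain ⟨f, hfv, hf⟩ : ∃ f : Fin (3*q-2) → E2, f v 0 = -1 ∧ ∀ u,
      (u = v ∧ f u 0 = -1 ∧ f u 1 = 0) ∨ (u ∈ A ∧ f u 0 = 1 ∧ f u 1 = 0) ∨
      (u ∈ B ∧ f u 0 = 0 ∧ f u 1 = 1) ∨ (u ∈ C ∧ f u 0 = 0 ∧ f u 1 = -1) := by
    refine ⟨fun u => if u = v then !₂[-1, 0] else if u ∈ A then !₂[1, 0] else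
      if u ∈ B then !₂[0, 1] else !₂[0, -1], by simp, fun u => ?_⟩
    have := hABC u
    by_cases hv : u = v
    · simp [hv]
    by_cases hA : u ∈ A
    · simp [hv, hA]
    by_cases hB : u ∈ B
    · simp [hv, hA, hB]
    · simp [hv, hA, hB, this]
  obtain ⟨a, b, w, x, hdisj, hx⟩ := hG.exists_mem_convexHull f
  have hvdisj : ∀ i j, v ∈ (w i).support → v ∈ (w j).support → i = j := fun i j hi hj => by
    by_contra hne
    exact Finset.disjoint_left.1 (hdisj i j hne) (List.mem_toFinset.2 hi) (List.mem_toFinset.2 hj)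
  have hmiss : ∀ S : Finset (Fin (3*q-2)), S.card < q → ∃ i, ∀ u ∈ (w i).support, u ∉ S :=
    fun S hS => by simpa using exists_forall_notMem_of_card_lt hdisj hS
  have hweak : ∀ (i) (c d : ℝ), (∀ u ∈ (w i).support, 0 ≤ c * f u 0 + d * f u 1) →
      0 ≤ c * x 0 + d * x 1 := fun i c d h =>
    nonneg_of_mem_convexHull (hx i) c d (Set.forall_mem_image.2 h)
  have hstrict : ∀ (i) (c d : ℝ), (∀ u ∈ (w i).support, 0 < c * f u 0 + d * f u 1) →
      0 < c * x 0 + d * x 1 := fun i c d h =>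
    pos_of_mem_convexHull (hx i) c d (Set.forall_mem_image.2 h)
  obtain ⟨i, hi⟩ := hmiss A hA
  obtain ⟨j, hj⟩ := hmiss B hB
  obtain ⟨k, hk⟩ := hmiss C hC
  obtain ⟨l, hl⟩ := hmiss {v} (by simpa using by omega)
  simp only [Finset.mem_singleton] at hl
  have h₁ := hweak i (-1) 0 fun u hu => by
    rcases hf u with ⟨h, h0, h1⟩ | ⟨h, h0, h1⟩ | ⟨h, h0, h1⟩ | ⟨h, h0, h1⟩ <;>
      rw [h0, h1] <;> norm_num
    exact hi u hu h
  have h₂ := hweak j 0 (-1) fun u hu => by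
    rcases hf u with ⟨h, h0, h1⟩ | ⟨h, h0, h1⟩ | ⟨h, h0, h1⟩ | ⟨h, h0, h1⟩ <;>
      rw [h0, h1] <;> norm_num
    exact hj u hu h
  have h₃ := hweak k 0 1 fun u hu => by
    rcases hf u with ⟨h, h0, h1⟩ | ⟨h, h0, h1⟩ | ⟨h, h0, h1⟩ | ⟨h, h0, h1⟩ <;>
      rw [h0, h1] <;> norm_num
    exact hk u hu h
  have h₄ := hweak l 1 0 fun u hu => by
    rcases hf u with ⟨h, h0, h1⟩ | ⟨h, h0, h1⟩ | ⟨h, h0, h1⟩ | ⟨h, h0, h1⟩ <;>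
      rw [h0, h1] <;> norm_num
    exact hl u hu h
  have hvj : v ∈ (w j).support := by
    by_contra hvj
    have := hstrict j 1 (-1) fun u hu => by
      rcases hf u with ⟨h, h0, h1⟩ | ⟨h, h0, h1⟩ | ⟨h, h0, h1⟩ | ⟨h, h0, h1⟩ <;>
        rw [h0, h1] <;> norm_num
      · exact hvj (h ▸ hu)
      · exact hj u hu h
    linarith
  have hvk : v ∈ (w k).support := by
    by_contra hvk
    have := hstrict k 1 1 fun u hu => by
      rcases hf u with ⟨h, h0, h1⟩ | ⟨h, h0, h1⟩ | ⟨h, h0, h1⟩ | ⟨h, h0, h1⟩ <;>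
        rw [h0, h1] <;> norm_num
      · exact hvk (h ▸ hu)
      · exact hk u hu h
    linarith
  obtain rfl := hvdisj j k hvj hvk
  obtain ⟨u, hu, huv⟩ : ∃ u ∈ (w j).support, u ≠ v := by
    by_contra! h
    have := hstrict j (-1) 0 fun u hu => by
      rw [h u hu, hfv]
      norm_num
    linarith
  obtain ⟨z, hz, hvz⟩ := (w j).exists_adj_of_mem_support hvj hu huv
  rw [SimpleGraph.deleteEdges_adj] at hvz
  have hzA : z ∈ A := by
    by_contra hzA
    exact hk z hz (hABC z hvz.1.ne' hzA (hj z hz))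
  exact hvz.2 (hAN z hzA)
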